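/- arXiv:1707.06345 — 2 statements merged into one kernel-verified Lean document; each statement's English description precedes it below -/
import Mathlib

section
/- Let (X,T) be a topological dynamical system with metric d. Then sup_{ρ ∈ 𝓜(X,T)} lim_{ε→0} limsup_{n→∞} (1/n) log S_n(d,ρ,ε) = h_top(T) = sup_{ρ ∈ 𝓜(X,T)} lim_{ε→0} liminf_{n→∞} (1/n) log S_n(d,ρ,ε), where the supremum is over all T-invariant Borel probability measures ρ and h_top(T) is the topological entropy of (X,T). -/
open MeasureTheory Filter

/-- The Bowen-type averaged metric `d̄_n(x,y) = (1/n) ∑_{i=0}^{n-1} d(Tⁱx, Tⁱy)`. -/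
noncomputable def dbar {X : Type*} [PseudoMetricSpace X] (T : X → X) (n : ℕ) (x y : X) : ℝ :=
  (∑ i ∈ Finset.range n, dist (T^[i] x) (T^[i] y)) / n

/-- The measure complexity function `S_n(d,ρ,ε)`. -/
noncomputable def measureComplexity {X : Type*} [PseudoMetricSpace X] [MeasurableSpace X]
    (T : X → X) (ρ : Measure X) (n : ℕ) (ε : ℝ) : ℕ :=
  sInf {m : ℕ | ∃ xs : Fin m → X,
    1 - ε < (ρ (⋃ i, {y | dbar T n (xs i) y < ε})).toReal}

/-! Bowen balls lie in `d̄_n`-balls, so `S_n(d,ρ,ε)` is at most the covering number that defines the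
topological entropy. Conversely, let `α` exceed the supremum of the lower limits and fix a small
`ε`. Every invariant `ρ` has some `n` and fewer than `e^{αn}` centres whose open `d̄_n`-thickening
has measure greater than `1 - ε`, which is an open condition on `ρ` in the weak-* topology. Limits
of empirical measures are invariant, so by compactness there are finitely many such thickenings for
which every long orbit spends a proportion `1 - ε` of its time in one of them. Averaging over the
`n` residues mod `n`, one finds that such an orbit follows, up to a small proportion of times, a
concatenation of length-`n` orbit segments of the centres. There are about `e^{αN}` concatenations
of length `N`, and correcting the exceptional times costs only a factor `e^{γN}` with `γ` small (the
size of a Hamming ball of small relative radius). Hence the topological entropy is at most `α`. -/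

open Dynamics ExpGrowth Topology
open scoped ENNReal Finset

section EmpiricalMeasure

variable {X : Type*} [MeasurableSpace X] {T : X → X} {n : ℕ} {x : X}

/-- The empirical measure of the orbit segment `x, T x, …, Tⁿ x`. Averaging over `n + 1` points
instead of `n` makes it a probability measure for every `n`. -/
noncomputable def empiricalMeasure (T : X → X) (n : ℕ) (x : X) : ProbabilityMeasure X :=
  ⟨((n + 1 : ℕ) : ℝ≥0∞)⁻¹ • ∑ k ∈ Finset.range (n + 1), Measure.dirac (T^[k] x), ⟨by
    simp [ENNReal.inv_mul_cancel]⟩⟩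

lemma integral_empiricalMeasure {g : X → ℝ} (hg : StronglyMeasurable g) :
    ∫ y, g y ∂(empiricalMeasure T n x : Measure X) = birkhoffAverage ℝ T g (n + 1) x := by
  have hint (k : ℕ) : Integrable g (Measure.dirac (T^[k] x)) := integrable_dirac' hg (by simp)
  rw [empiricalMeasure, ProbabilityMeasure.coe_mk, integral_smul_measure,
    integral_finsetSum_measure fun k _ ↦ hint k]
  simp only [integral_dirac' _ _ hg, ENNReal.toReal_inv, ENNReal.toReal_natCast, birkhoffAverage,
    birkhoffSum]

lemma real_empiricalMeasure {G : Set X} (hG : MeasurableSet G) :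
    (empiricalMeasure T n x : Measure X).real G
      = birkhoffAverage ℝ T (G.indicator 1) (n + 1) x := by
  rw [← integral_empiricalMeasure (stronglyMeasurable_one.indicator hG), integral_indicator_one hG]

lemma isOpen_setOf_lt_real [TopologicalSpace X] [OpensMeasurableSpace X] [HasOuterApproxClosed X]
    {G : Set X} (hG : IsOpen G) (a : ℝ) :
    IsOpen {μ : ProbabilityMeasure X | a < (μ : Measure X).real G} := by
  refine isOpen_iff_mem_nhds.2 fun μ hμ ↦ ?_
  rcases lt_or_ge a 0 with ha | ha
  · exact univ_mem' fun ν ↦ ha.trans_le measureReal_nonneg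
  have hlt : ENNReal.ofReal a < (μ : Measure X) G :=
    (ENNReal.ofReal_lt_iff_lt_toReal ha (measure_ne_top _ _)).2 hμ
  filter_upwards [eventually_lt_of_lt_liminf (hlt.trans_le
    (ProbabilityMeasure.le_liminf_measure_open_of_tendsto tendsto_id hG))] with ν hν
  exact (ENNReal.ofReal_lt_iff_lt_toReal ha (measure_ne_top _ _)).1 hν

variable [TopologicalSpace X] [BorelSpace X]

lemma integral_map_empiricalMeasure (hT : Continuous T) {g : X → ℝ} (hg : StronglyMeasurable g) :
    ∫ y, g y ∂((empiricalMeasure T n x : Measure X).map T)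
      = birkhoffAverage ℝ T g (n + 1) (T x) := by
  rw [integral_map hT.measurable.aemeasurable hg.aestronglyMeasurable,
    integral_empiricalMeasure (hg.comp_measurable hT.measurable) (g := fun y ↦ g (T y))]
  simp only [birkhoffAverage, birkhoffSum, Function.Commute.self_iterate T _ |>.eq]

lemma tendsto_map_empiricalMeasure (hT : Continuous T) {ι : Type*} {l : Filter ι}
    {n : ι → ℕ} {x : ι → X} (hn : Tendsto n l atTop) {μ : ProbabilityMeasure X}
    (hμ : Tendsto (fun i ↦ empiricalMeasure T (n i) (x i)) l (𝓝 μ)) :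
    Tendsto (fun i ↦ (empiricalMeasure T (n i) (x i)).map hT.measurable.aemeasurable) l (𝓝 μ) := by
  rw [ProbabilityMeasure.tendsto_iff_forall_integral_tendsto] at hμ ⊢
  intro f
  have hf : StronglyMeasurable f := f.continuous.measurable.stronglyMeasurable
  refine (hμ f).congr_dist ?_
  simp only [ProbabilityMeasure.toMeasure_map, integral_map_empiricalMeasure hT hf,
    integral_empiricalMeasure hf]
  refine squeeze_zero (fun i ↦ dist_nonneg) (fun i ↦ ?_) (g := fun i ↦ 2 * ‖f‖ / (n i + 1 : ℕ)) ?_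
  · rw [dist_comm, dist_birkhoffAverage_apply_birkhoffAverage]
    gcongr
    exact f.dist_le_two_norm _ _
  · exact ((tendsto_const_div_atTop_nhds_zero_nat _).comp (tendsto_add_atTop_nat 1)).comp hn

variable [HasOuterApproxClosed X]

lemma measurePreserving_of_tendsto_empiricalMeasure (hT : Continuous T) {ι : Type*} {l : Filter ι}
    [l.NeBot] {n : ι → ℕ} {x : ι → X} (hn : Tendsto n l atTop) {μ : ProbabilityMeasure X}
    (hμ : Tendsto (fun i ↦ empiricalMeasure T (n i) (x i)) l (𝓝 μ)) :
    MeasurePreserving T (μ : Measure X) μ := by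
  have hmap : μ.map hT.measurable.aemeasurable = μ := tendsto_nhds_unique
    (ProbabilityMeasure.tendsto_map_of_tendsto_of_continuous _ μ hμ hT)
    (tendsto_map_empiricalMeasure hT hn hμ)
  exact ⟨hT.measurable, congrArg ProbabilityMeasure.toMeasure hmap⟩

variable [CompactSpace X] [T2Space X]

lemma eventually_forall_empiricalMeasure_mem (hT : Continuous T) {V : Set (ProbabilityMeasure X)}
    (hV : IsOpen V)
    (hinv : ∀ μ : ProbabilityMeasure X, MeasurePreserving T (μ : Measure X) μ → μ ∈ V) :
    ∀ᶠ n in atTop, ∀ x, empiricalMeasure T n x ∈ V := by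
  suffices h : ∀ᶠ p : ℕ × X in atTop ×ˢ ⊤, empiricalMeasure T p.1 p.2 ∈ V from mem_prod_top.1 h
  refine mem_iff_ultrafilter.2 fun F hF ↦ ?_
  obtain ⟨μ, -, hμ⟩ := isCompact_univ.ultrafilter_le_nhds
    (F.map fun p ↦ empiricalMeasure T p.1 p.2) (by simp)
  have hμ : Tendsto (fun p : ℕ × X ↦ empiricalMeasure T p.1 p.2) F (𝓝 μ) := hμ
  have hμV : μ ∈ V := hinv μ <|
    measurePreserving_of_tendsto_empiricalMeasure hT (tendsto_fst.mono_left hF) hμ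
  exact hμ (hV.mem_nhds hμV)

lemma exists_finset_eventually_forall_lt_birkhoffAverage (hT : Continuous T) {ι : Type*}
    {G : ι → Set X} (hG : ∀ i, IsOpen (G i)) {a : ℝ}
    (hinv : ∀ μ : Measure X, IsProbabilityMeasure μ → MeasurePreserving T μ μ →
      ∃ i, a < μ.real (G i)) :
    ∃ s : Finset ι, ∀ᶠ n in atTop, ∀ x, ∃ i ∈ s,
      a < birkhoffAverage ℝ T ((G i).indicator 1) n x := by
  let V (i : ι) : Set (ProbabilityMeasure X) := {μ | a < (μ : Measure X).real (G i)}
  have hV (i : ι) : IsOpen (V i) := isOpen_setOf_lt_real (hG i) a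
  let M : Set (ProbabilityMeasure X) := {μ | μ.map hT.measurable.aemeasurable = μ}
  have hM : IsCompact M :=
    (isClosed_eq (ProbabilityMeasure.continuous_map hT) continuous_id).isCompact
  obtain ⟨s, hs⟩ := hM.elim_finite_subcover V hV fun μ hμ ↦ Set.mem_iUnion.2 <|
    hinv μ inferInstance ⟨hT.measurable, congrArg ProbabilityMeasure.toMeasure hμ⟩
  refine ⟨s, ?_⟩
  rw [← map_add_atTop_eq_nat 1, eventually_map]
  filter_upwards [eventually_forall_empiricalMeasure_mem hT (isOpen_biUnion fun i _ ↦ hV i)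
    fun μ hμ ↦ hs (ProbabilityMeasure.toMeasure_injective hμ.map_eq)] with n hn x
  obtain ⟨i, his, hi⟩ := Set.mem_iUnion₂.1 (hn x)
  exact ⟨i, his, (real_empiricalMeasure (hG i).measurableSet).symm ▸ hi⟩

end EmpiricalMeasure

section ShiftAveraging

-- Cut `ℕ` into blocks of length `n` starting at the times congruent to `r`. As `r` and `i` vary,
-- the pair (start of the block of `i`, offset of `i` in it) takes no value twice.
lemma sum_card_filter_blocks_le {n : ℕ} (hn : n ≠ 0) (N : ℕ) (P : ℕ → ℕ → Prop)
    [∀ s, DecidablePred (P s)] :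
    ∑ r ∈ Finset.range n, #{i ∈ Finset.Ico n N | P (r + n * ((i - r) / n)) ((i - r) % n)}
      ≤ ∑ s ∈ Finset.range N, #{o ∈ Finset.range n | P s o} := by
  rw [← Finset.card_sigma, ← Finset.card_sigma]
  refine Finset.card_le_card_of_injOn
    (fun p ↦ ⟨p.1 + n * ((p.2 - p.1) / n), (p.2 - p.1) % n⟩) ?_ ?_
  · rintro ⟨r, i⟩ h
    simp only [Finset.mem_coe, Finset.mem_sigma, Finset.mem_filter, Finset.mem_Ico,
      Finset.mem_range] at h ⊢
    obtain ⟨hr, ⟨hni, hiN⟩, hP⟩ := h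
    have := Nat.mod_add_div (i - r) n
    exact ⟨by lia, Nat.mod_lt _ hn.pos, hP⟩
  · rintro ⟨r, i⟩ h ⟨r', i'⟩ h' heq
    simp only [Finset.mem_coe, Finset.mem_sigma, Finset.mem_filter, Finset.mem_Ico,
      Finset.mem_range, Sigma.mk.injEq, heq_eq_eq] at h h' heq
    have hr : r = r' := by
      have := congrArg (· % n) heq.1
      simpa only [Nat.add_mul_mod_self_left, Nat.mod_eq_of_lt h.1, Nat.mod_eq_of_lt h'.1] using this
    subst hr
    have hi := Nat.mod_add_div (i - r) n
    have hi' := Nat.mod_add_div (i' - r) n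
    obtain rfl : i = i' := by
      rw [heq.2, Nat.add_left_cancel heq.1] at hi
      lia
    rfl

lemma exists_mul_card_filter_blocks_le {n : ℕ} (hn : n ≠ 0) (N : ℕ) (P : ℕ → ℕ → Prop)
    [∀ s, DecidablePred (P s)] :
    ∃ r < n, n * #{i ∈ Finset.Ico n N | P (r + n * ((i - r) / n)) ((i - r) % n)}
      ≤ ∑ s ∈ Finset.range N, #{o ∈ Finset.range n | P s o} := by
  by_contra! h
  have hlt := Finset.sum_lt_sum_of_nonempty (s := Finset.range n) (by simpa)
    fun r hr ↦ h r (Finset.mem_range.1 hr)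
  rw [Finset.sum_const, Finset.card_range, smul_eq_mul, ← Finset.mul_sum] at hlt
  exact (Nat.lt_of_mul_lt_mul_left hlt).not_ge (sum_card_filter_blocks_le hn N P)

variable {X : Type*} [PseudoMetricSpace X] {T : X → X}

lemma mul_card_le_dist_iterate_le_mul_dbar (η : ℝ) (n : ℕ) (x y : X) :
    η * #{j ∈ Finset.range n | η ≤ dist (T^[j] x) (T^[j] y)} ≤ n * dbar T n x y := by
  rcases eq_or_ne n 0 with rfl | hn
  · simp
  calc η * #{j ∈ Finset.range n | η ≤ dist (T^[j] x) (T^[j] y)}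
      ≤ ∑ j ∈ Finset.range n with η ≤ dist (T^[j] x) (T^[j] y), dist (T^[j] x) (T^[j] y) := by
        rw [mul_comm, ← nsmul_eq_mul]
        exact Finset.card_nsmul_le_sum _ _ _ fun j hj ↦ (Finset.mem_filter.1 hj).2
    _ ≤ ∑ j ∈ Finset.range n, dist (T^[j] x) (T^[j] y) :=
        Finset.sum_le_sum_of_subset_of_nonneg (Finset.filter_subset _ _) fun _ _ _ ↦ dist_nonneg
    _ = n * dbar T n x y := by rw [dbar, mul_div_cancel₀ _ (by exact_mod_cast hn)]

/-- The concatenation of the orbit segments of length `n` of the points `y 0, y 1, …`, the first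
segment starting at time `r`. As subtraction truncates, the times before `r` all get the
value `y 0`. -/
def concatOrbits (T : X → X) (n r : ℕ) (y : ℕ → X) (i : ℕ) : X :=
  T^[(i - r) % n] (y ((i - r) / n))

/-- The union of the `d̄_n`-balls of radius `ε` around a family of centres. -/
def dbarThickening (T : X → X) (n : ℕ) (ε : ℝ) {ι : Type*} (c : ι → X) : Set X :=
  ⋃ i, {y | dbar T n (c i) y < ε}

lemma card_le_dist_iterate_le {n : ℕ} {ε η : ℝ} (hε : 0 ≤ ε) (hη : 0 < η) {A : Set X} {x y : X}
    (hy : x ∈ A → dbar T n y x < ε) :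
    (#{o ∈ Finset.range n | η ≤ dist (T^[o] y) (T^[o] x)} : ℝ)
      ≤ n * (ε / η + (1 - A.indicator 1 x)) := by
  by_cases hx : x ∈ A
  · rw [Set.indicator_of_mem hx, Pi.one_apply, sub_self, add_zero, ← mul_div_assoc, le_div_iff₀' hη]
    exact (mul_card_le_dist_iterate_le_mul_dbar η n y x).trans (by gcongr; exact (hy hx).le)
  · calc (#{o ∈ Finset.range n | η ≤ dist (T^[o] y) (T^[o] x)} : ℝ) ≤ n * 1 := by
          rw [mul_one]
          exact_mod_cast (Finset.card_filter_le _ _).trans_eq (Finset.card_range n)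
      _ ≤ n * (ε / η + (1 - A.indicator 1 x)) := by
          rw [Set.indicator_of_notMem hx, sub_zero]
          gcongr
          exact le_add_of_nonneg_left (by positivity)

lemma exists_card_Ico_le_dist_concatOrbits_le {ι : Type*} [Nonempty ι] {n : ℕ} (hn : n ≠ 0)
    {ε η : ℝ} (hε : 0 ≤ ε) (hη : 0 < η) (c : ι → X) {N : ℕ} {x : X}
    (hx : (1 - ε) * N ≤ birkhoffSum T ((dbarThickening T n ε c).indicator 1) N x) :
    ∃ r < n, ∃ w : ℕ → ι,
      (#{i ∈ Finset.Ico n N | η ≤ dist (concatOrbits T n r (c ∘ w) i) (T^[i] x)} : ℝ)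
        ≤ (ε / η + ε) * N := by
  set A := dbarThickening T n ε c
  have hcentre (s : ℕ) : ∃ i, T^[s] x ∈ A → dbar T n (c i) (T^[s] x) < ε :=
    (em (T^[s] x ∈ A)).elim (fun h ↦ (Set.mem_iUnion.1 h).imp fun _ hi _ ↦ hi)
      fun h ↦ ⟨Classical.arbitrary ι, (absurd · h)⟩
  choose v hv using hcentre
  obtain ⟨r, hr, hcard⟩ := exists_mul_card_filter_blocks_le hn N
    fun s o ↦ η ≤ dist (T^[o] (c (v s))) (T^[o] (T^[s] x))
  refine ⟨r, hr, fun k ↦ v (r + n * k), ?_⟩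
  have hsplit : ∀ i ∈ Finset.Ico n N,
      T^[(i - r) % n] (T^[r + n * ((i - r) / n)] x) = T^[i] x := fun i hi ↦ by
    rw [← Function.iterate_add_apply]
    have := Nat.mod_add_div (i - r) n
    grind
  refine le_of_mul_le_mul_left ?_ (by positivity : (0 : ℝ) < n)
  calc (n : ℝ) * #{i ∈ Finset.Ico n N |
        η ≤ dist (concatOrbits T n r (c ∘ fun k ↦ v (r + n * k)) i) (T^[i] x)}
      ≤ ∑ s ∈ Finset.range N,
          (#{o ∈ Finset.range n | η ≤ dist (T^[o] (c (v s))) (T^[o] (T^[s] x))} : ℝ) := by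
        rw [Finset.filter_congr fun i hi ↦ by rw [← hsplit i hi]]
        exact_mod_cast hcard
    _ ≤ ∑ s ∈ Finset.range N, n * (ε / η + (1 - A.indicator 1 (T^[s] x))) :=
        Finset.sum_le_sum fun s _ ↦ card_le_dist_iterate_le hε hη (hv s)
    _ = n * (ε / η * N + (N - birkhoffSum T (A.indicator 1) N x)) := by
        rw [← Finset.mul_sum, Finset.sum_add_distrib, Finset.sum_sub_distrib]
        simp only [Finset.sum_const, Finset.card_range, nsmul_eq_mul, mul_one, birkhoffSum,
          mul_comm]
    _ ≤ n * ((ε / η + ε) * N) := by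
        gcongr
        linarith

-- A word of length `N / n + 1` is enough, since only the blocks of the times below `N` matter.
lemma exists_card_le_dist_concatOrbits_le {ι : Type*} [Nonempty ι] {n : ℕ} (hn : n ≠ 0) {ε η : ℝ}
    (hε : 0 ≤ ε) (hη : 0 < η) (c : ι → X) {N : ℕ} {x : X}
    (hx : (1 - ε) * N ≤ birkhoffSum T ((dbarThickening T n ε c).indicator 1) N x) :
    ∃ (r : Fin n) (w : Fin (N / n + 1) → ι),
      (#{i ∈ Finset.range N |
        η ≤ dist (concatOrbits T n r (fun k ↦ c (w (Fin.ofNat _ k))) i) (T^[i] x)} : ℝ)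
        ≤ n + (ε / η + ε) * N := by
  obtain ⟨r, hr, w, hlate⟩ := exists_card_Ico_le_dist_concatOrbits_le hn hε hη c hx
  refine ⟨⟨r, hr⟩, fun k ↦ w k, ?_⟩
  have hword : ∀ i ∈ Finset.range N,
      concatOrbits T n r (fun k ↦ c (w (Fin.ofNat (N / n + 1) k))) i
        = concatOrbits T n r (c ∘ w) i := fun i hi ↦ by
    have : (i - r) / n < N / n + 1 :=
      Nat.lt_succ_of_le (Nat.div_le_div_right (by grind))
    simp only [concatOrbits, Fin.val_ofNat, Nat.mod_eq_of_lt this, Function.comp_apply]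
  rw [Finset.filter_congr fun i hi ↦ by rw [hword i hi]]
  have hsub : {i ∈ Finset.range N | η ≤ dist (concatOrbits T n r (c ∘ w) i) (T^[i] x)} ⊆
      Finset.range n ∪
        {i ∈ Finset.Ico n N | η ≤ dist (concatOrbits T n r (c ∘ w) i) (T^[i] x)} := by
    grind
  calc (#{i ∈ Finset.range N | η ≤ dist (concatOrbits T n r (c ∘ w) i) (T^[i] x)} : ℝ)
      ≤ n + #{i ∈ Finset.Ico n N | η ≤ dist (concatOrbits T n r (c ∘ w) i) (T^[i] x)} := by
        have := (Finset.card_le_card hsub).trans (Finset.card_union_le _ _)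
        rw [Finset.card_range] at this
        exact_mod_cast this
    _ ≤ n + (ε / η + ε) * N := by gcongr

end ShiftAveraging

section HammingBall

variable {ι α : Type*} [Fintype ι] [DecidableEq ι] [Fintype α] [DecidableEq α]

-- The weight `t ^ hammingDist f z` is a product over the coordinates, and it is at least `t ^ d` on
-- the ball of radius `d`.
lemma card_hammingDist_le_mul_rpow_le {t : ℝ} (ht : 0 < t) (ht1 : t ≤ 1) (z : ι → α) (d : ℝ) :
    (#{f : ι → α | (hammingDist f z : ℝ) ≤ d} : ℝ) * t ^ d
      ≤ (1 + Fintype.card α * t) ^ Fintype.card ι := by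
  calc (#{f : ι → α | (hammingDist f z : ℝ) ≤ d} : ℝ) * t ^ d
      ≤ ∑ f : ι → α with (hammingDist f z : ℝ) ≤ d, t ^ hammingDist f z := by
        rw [← nsmul_eq_mul]
        refine Finset.card_nsmul_le_sum _ _ _ fun f hf ↦ ?_
        rw [← Real.rpow_natCast]
        exact Real.rpow_le_rpow_of_exponent_ge ht ht1 (Finset.mem_filter.1 hf).2
    _ ≤ ∑ f : ι → α, t ^ hammingDist f z :=
        Finset.sum_le_sum_of_subset_of_nonneg (Finset.filter_subset _ _) fun _ _ _ ↦ by positivity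
    _ = ∑ f : ι → α, ∏ i, if f i ≠ z i then t else 1 := by
        simp only [hammingDist, Finset.prod_ite, Finset.prod_const, one_pow, mul_one]
    _ = ∏ i, ∑ a : α, if a ≠ z i then t else 1 := by
        rw [Finset.prod_univ_sum, Fintype.piFinset_univ]
    _ ≤ ∏ _i : ι, (1 + Fintype.card α * t) := by
        refine Finset.prod_le_prod (fun i _ ↦ by positivity) fun i _ ↦ ?_
        calc ∑ a : α, (if a ≠ z i then t else 1)
            ≤ ∑ a : α, ((if a = z i then 1 else 0) + t) :=
              Finset.sum_le_sum fun a _ ↦ by split_ifs <;> grind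
          _ = 1 + Fintype.card α * t := by
              simp only [Finset.sum_add_distrib, Fintype.sum_ite_eq', Finset.sum_const,
                Finset.card_univ, nsmul_eq_mul]
    _ = (1 + Fintype.card α * t) ^ Fintype.card ι := by
        rw [Finset.prod_const, Finset.card_univ]

variable (α) in
lemma exists_forall_card_hammingDist_le_exp {γ : ℝ} (hγ : 0 < γ) :
    ∃ κ > 0, ∀ (N : ℕ) (z : Fin N → α),
      (#{f : Fin N → α | (hammingDist f z : ℝ) ≤ κ * N} : ℝ) ≤ Real.exp (γ * N) := by
  have hlim : Tendsto (fun s ↦ Fintype.card α * Real.exp (-s)) atTop (𝓝 0) := by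
    simpa using Real.tendsto_exp_neg_atTop_nhds_zero.const_mul (Fintype.card α : ℝ)
  obtain ⟨s, hsγ, hs⟩ :=
    ((hlim.eventually_le_const (half_pos hγ)).and (eventually_gt_atTop 0)).exists
  refine ⟨γ / 2 / s, by positivity, fun N z ↦ ?_⟩
  have hcard := card_hammingDist_le_mul_rpow_le (Real.exp_pos (-s))
    (Real.exp_le_one_iff.2 (neg_nonpos.2 hs.le)) z (γ / 2 / s * N)
  have hweight : Real.exp (-s) ^ (γ / 2 / s * N) = Real.exp (-(γ / 2 * N)) := by
    rw [← Real.exp_mul]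
    congr 1
    field_simp
  rw [hweight, Real.exp_neg, ← div_eq_mul_inv, div_le_iff₀ (Real.exp_pos _), Fintype.card_fin]
    at hcard
  calc (#{f : Fin N → α | (hammingDist f z : ℝ) ≤ γ / 2 / s * N} : ℝ)
      ≤ (1 + Fintype.card α * Real.exp (-s)) ^ N * Real.exp (γ / 2 * N) := hcard
    _ ≤ Real.exp (γ / 2) ^ N * Real.exp (γ / 2 * N) := by
        gcongr
        rw [add_comm]
        exact (Real.add_one_le_exp _).trans (Real.exp_le_exp.2 hsγ)
    _ = Real.exp (γ * N) := by
        rw [← Real.exp_nat_mul, ← Real.exp_add]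
        ring_nf

end HammingBall

section CoverCounting

variable {X : Type*} {T : X → X} {F : Set X} {n : ℕ}

lemma coverMincard_le_card_of_code {γ : Type*} {U : SetRel X X} (code : X → γ) {A : Finset γ}
    (hA : Set.MapsTo code F A)
    (hcode : ∀ x ∈ F, ∀ y ∈ F, code x = code y → (x, y) ∈ dynEntourage T U n) :
    coverMincard T F U n ≤ #A := by
  classical
  rcases F.eq_empty_or_nonempty with rfl | ⟨x₀, -⟩
  · simp
  have : Nonempty X := ⟨x₀⟩
  let rep := Function.invFunOn code F
  have hcover : IsDynCoverOf T F U n (A.image rep) := fun x hx ↦ by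
    have hx' : code x ∈ code '' F := Set.mem_image_of_mem code hx
    refine ⟨rep (code x), by simpa using ⟨code x, hA hx, rfl⟩, ?_⟩
    exact hcode x hx _ (Function.invFunOn_mem hx') (Function.invFunOn_eq hx').symm
  exact hcover.coverMincard_le_card.trans (by exact_mod_cast Finset.card_image_le)

lemma coverMincard_biUnion_le {ι : Type*} (U : SetRel X X) (s : Finset ι) (G : ι → Set X) :
    (coverMincard T (⋃ i ∈ s, G i) U n : ℝ≥0∞) ≤ ∑ i ∈ s, (coverMincard T (G i) U n : ℝ≥0∞) := by
  classical
  induction s using Finset.induction_on with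
  | empty => simp
  | insert i s hi ih =>
    rw [Finset.set_biUnion_insert, Finset.sum_insert hi]
    calc (coverMincard T (G i ∪ ⋃ j ∈ s, G j) U n : ℝ≥0∞)
        ≤ coverMincard T (G i) U n + coverMincard T (⋃ j ∈ s, G j) U n := by
          exact_mod_cast coverMincard_union_le T (G i) (⋃ j ∈ s, G j) U n
      _ ≤ coverMincard T (G i) U n + ∑ j ∈ s, (coverMincard T (G j) U n : ℝ≥0∞) := by gcongr

variable [PseudoMetricSpace X]

-- Record only the times at which the orbit of `x` is far from `z`, with a nearby point of the net.
lemma coverMincard_le_card_hammingDist_le {β : Type*} [Fintype β] [DecidableEq β] {η d : ℝ}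
    {y : β → X} (hy : ∀ x, ∃ b, dist x (y b) < η) (z : ℕ → X)
    (hz : ∀ x ∈ F, (#{k ∈ Finset.range n | η ≤ dist (z k) (T^[k] x)} : ℝ) ≤ d) :
    coverMincard T F {p | dist p.1 p.2 < 2 * η} n
      ≤ #{f : Fin n → Option β | (hammingDist f fun _ ↦ none : ℝ) ≤ d} := by
  choose b hb using hy
  let code (x : X) (k : Fin n) : Option β :=
    if η ≤ dist (z k) (T^[k] x) then some (b (T^[k] x)) else none
  refine coverMincard_le_card_of_code code (fun x hx ↦ ?_) fun x _ x' _ hxx' ↦ ?_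
  · have : hammingDist (code x) (fun _ ↦ none)
        = #{k ∈ Finset.range n | η ≤ dist (z k) (T^[k] x)} := by
      rw [hammingDist, Finset.card_filter, Finset.card_filter,
        ← Fin.sum_univ_eq_sum_range fun k ↦ if η ≤ dist (z k) (T^[k] x) then 1 else 0]
      simp only [code, ne_eq, ite_eq_right_iff, reduceCtorEq, imp_false, not_not]
    simpa [this] using hz x hx
  · refine mem_dynEntourage.2 fun k hk ↦ ?_
    have hk := congrFun hxx' ⟨k, hk⟩
    change dist (T^[k] x) (T^[k] x') < 2 * η
    by_cases h : η ≤ dist (z k) (T^[k] x) <;> by_cases h' : η ≤ dist (z k) (T^[k] x') <;>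
      simp only [code, h, h', if_true, if_false, reduceCtorEq, Option.some.injEq] at hk
    · have := hb (T^[k] x')
      rw [← hk] at this
      linarith [hb (T^[k] x), dist_triangle_right (T^[k] x) (T^[k] x') (y (b (T^[k] x)))]
    · linarith [dist_triangle_left (T^[k] x) (T^[k] x') (z k)]

lemma exists_forall_coverMincard_le_exp [CompactSpace X] {η γ : ℝ} (hη : 0 < η) (hγ : 0 < γ) :
    ∃ κ > 0, ∀ (T : X → X) (F : Set X) (N : ℕ) (z : ℕ → X),
      (∀ x ∈ F, (#{k ∈ Finset.range N | η ≤ dist (z k) (T^[k] x)} : ℝ) ≤ κ * N) →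
      (coverMincard T F {p | dist p.1 p.2 < 2 * η} N : ℝ≥0∞)
        ≤ ENNReal.ofReal (Real.exp (γ * N)) := by
  classical
  obtain ⟨s, -, hs, hcover⟩ := finite_cover_balls_of_compact (isCompact_univ (X := X)) hη
  have := hs.fintype
  have hnet (x : X) : ∃ b : s, dist x b < η := by simpa using hcover (Set.mem_univ x)
  obtain ⟨κ, hκ, hcard⟩ := exists_forall_card_hammingDist_le_exp (Option s) hγ
  refine ⟨κ, hκ, fun T F N z hz ↦ ?_⟩
  calc (coverMincard T F {p | dist p.1 p.2 < 2 * η} N : ℝ≥0∞)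
      ≤ (#{f : Fin N → Option s | (hammingDist f fun _ ↦ none : ℝ) ≤ κ * N} : ℝ≥0∞) := by
        exact_mod_cast coverMincard_le_card_hammingDist_le hnet z hz
    _ ≤ ENNReal.ofReal (Real.exp (γ * N)) := by
        rw [← ENNReal.ofReal_natCast]
        exact ENNReal.ofReal_le_ofReal (hcard N _)

end CoverCounting

section FrequentVisits

variable {X : Type*} {T : X → X}

/-- The points whose orbit spends at least a proportion `a` of the times before `N` in `A`. -/
def frequentVisitors (T : X → X) (A : Set X) (a : ℝ) (N : ℕ) : Set X :=
  {x | a * N ≤ birkhoffSum T (A.indicator 1) N x}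

lemma mem_frequentVisitors_of_le_birkhoffAverage {A : Set X} {a : ℝ} {N : ℕ} {x : X}
    (h : a ≤ birkhoffAverage ℝ T (A.indicator 1) N x) : x ∈ frequentVisitors T A a N := by
  rcases N.eq_zero_or_pos with rfl | hN
  · simp [frequentVisitors]
  · rw [birkhoffAverage, smul_eq_mul, ← div_eq_inv_mul, le_div_iff₀ (by positivity)] at h
    exact h

lemma natCast_pow_div_add_one_le {m : ℕ} (hm : m ≠ 0) (n N : ℕ) :
    (m : ℝ) ^ (N / n + 1) ≤ m * Real.exp (Real.log m / n * N) := by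
  rw [pow_succ', ← Real.rpow_natCast, Real.rpow_def_of_pos (by positivity),
    div_mul_eq_mul_div, mul_div_assoc]
  gcongr
  exact Nat.cast_div_le

lemma natCast_mul_pow_div_add_one_mul_exp_le {m : ℕ} (hm : m ≠ 0) (n N : ℕ) (γ : ℝ) :
    ((n * m ^ (N / n + 1) : ℕ) : ℝ≥0∞) * ENNReal.ofReal (Real.exp (γ * N))
      ≤ ((n * m : ℕ) : ℝ≥0∞) * EReal.exp (((Real.log m / n + γ : ℝ) : EReal) * N) := by
  have hexp : EReal.exp (((Real.log m / n + γ : ℝ) : EReal) * N)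
      = ENNReal.ofReal (Real.exp ((Real.log m / n + γ) * N)) := by
    rw [← EReal.exp_coe]
    norm_cast
  rw [hexp, ← ENNReal.ofReal_natCast, ← ENNReal.ofReal_natCast,
    ← ENNReal.ofReal_mul (by positivity), ← ENNReal.ofReal_mul (by positivity)]
  refine ENNReal.ofReal_le_ofReal ?_
  push_cast
  calc (n : ℝ) * m ^ (N / n + 1) * Real.exp (γ * N)
      ≤ n * (m * Real.exp (Real.log m / n * N)) * Real.exp (γ * N) := by
        gcongr
        exact natCast_pow_div_add_one_le hm n N
    _ = n * m * Real.exp ((Real.log m / n + γ) * N) := by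
        rw [add_mul, Real.exp_add]
        ring

variable [PseudoMetricSpace X]

lemma coverMincard_frequentVisitors_le {ι : Type*} [Fintype ι] [Nonempty ι] {n : ℕ} (hn : n ≠ 0)
    {ε η : ℝ} (hε : 0 ≤ ε) (hη : 0 < η) (c : ι → X) {N : ℕ} {U : SetRel X X} {b : ℝ≥0∞}
    (hb : ∀ (F : Set X) (z : ℕ → X),
      (∀ x ∈ F, (#{k ∈ Finset.range N | η ≤ dist (z k) (T^[k] x)} : ℝ) ≤ n + (ε / η + ε) * N) →
      (coverMincard T F U N : ℝ≥0∞) ≤ b) :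
    (coverMincard T (frequentVisitors T (dbarThickening T n ε c) (1 - ε) N) U N : ℝ≥0∞)
      ≤ (n * Fintype.card ι ^ (N / n + 1) : ℕ) * b := by
  classical
  let z (p : Fin n × (Fin (N / n + 1) → ι)) : ℕ → X :=
    concatOrbits T n p.1 fun k ↦ c (p.2 (Fin.ofNat _ k))
  let G (p : Fin n × (Fin (N / n + 1) → ι)) : Set X :=
    {x | (#{k ∈ Finset.range N | η ≤ dist (z p k) (T^[k] x)} : ℝ) ≤ n + (ε / η + ε) * N}
  have hsub : frequentVisitors T (dbarThickening T n ε c) (1 - ε) N ⊆ ⋃ p ∈ Finset.univ, G p :=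
    fun x hx ↦ by
      obtain ⟨r, w, hrw⟩ := exists_card_le_dist_concatOrbits_le hn hε hη c hx
      exact Set.mem_iUnion₂.2 ⟨(r, w), Finset.mem_univ _, hrw⟩
  calc (coverMincard T (frequentVisitors T (dbarThickening T n ε c) (1 - ε) N) U N : ℝ≥0∞)
      ≤ coverMincard T (⋃ p ∈ Finset.univ, G p) U N :=
        ENat.toENNReal_mono (coverMincard_monotone_subset T U N hsub)
    _ ≤ ∑ p, (coverMincard T (G p) U N : ℝ≥0∞) := coverMincard_biUnion_le U _ G
    _ ≤ ∑ _p : Fin n × (Fin (N / n + 1) → ι), b :=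
        Finset.sum_le_sum fun p _ ↦ hb (G p) (z p) fun _ hx ↦ hx
    _ = (n * Fintype.card ι ^ (N / n + 1) : ℕ) * b := by
        simp only [Finset.sum_const, Finset.card_univ, Fintype.card_prod, Fintype.card_fin,
          Fintype.card_fun, nsmul_eq_mul]

lemma eventually_nhdsGT_expGrowthSup_coverMincard_frequentVisitors_le [CompactSpace X] (T : X → X)
    {η γ : ℝ} (hη : 0 < η) (hγ : 0 < γ) :
    ∀ᶠ ε in 𝓝[>] (0 : ℝ), ∀ {n m : ℕ}, n ≠ 0 → m ≠ 0 → ∀ c : Fin m → X,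
      expGrowthSup (fun N ↦ (coverMincard T
        (frequentVisitors T (dbarThickening T n ε c) (1 - ε) N)
        {p | dist p.1 p.2 < 2 * η} N : ℝ≥0∞))
          ≤ (Real.log m / n + γ : ℝ) := by
  obtain ⟨κ, hκ, hcount⟩ := exists_forall_coverMincard_le_exp (X := X) hη hγ
  have hlim : Tendsto (fun ε : ℝ ↦ ε / η + ε) (𝓝[>] 0) (𝓝 0) :=
    tendsto_nhdsWithin_of_tendsto_nhds (Continuous.tendsto' (by fun_prop) _ _ (by simp))
  filter_upwards [hlim.eventually_le_const (half_pos hκ), self_mem_nhdsWithin] with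
    ε hεκ (hε : 0 < ε) n m hn hm c
  have := Fin.pos_iff_nonempty.1 hm.pos
  suffices h : ∀ᶠ N : ℕ in atTop, (coverMincard T
      (frequentVisitors T (dbarThickening T n ε c) (1 - ε) N) {p | dist p.1 p.2 < 2 * η} N : ℝ≥0∞)
        ≤ ((n * m : ℕ) : ℝ≥0∞) * EReal.exp (((Real.log m / n + γ : ℝ) : EReal) * N) from
    (expGrowthSup_le_of_eventually_le (ENNReal.natCast_ne_top _) h).trans_eq expGrowthSup_exp
  have hlarge : ∀ᶠ N : ℕ in atTop, (n : ℝ) ≤ κ / 2 * N :=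
    (tendsto_natCast_atTop_atTop.const_mul_atTop (half_pos hκ)).eventually_ge_atTop _
  filter_upwards [hlarge] with N hN
  have hmismatch : n + (ε / η + ε) * N ≤ κ * N :=
    calc n + (ε / η + ε) * N ≤ κ / 2 * N + κ / 2 * N := by gcongr
      _ = κ * N := by ring
  refine (coverMincard_frequentVisitors_le hn hε.le hη c fun F z hz ↦
    hcount T F N z fun x hx ↦ (hz x hx).trans hmismatch).trans ?_
  rw [Fintype.card_fin]
  exact natCast_mul_pow_div_add_one_mul_exp_le hm n N γ

end FrequentVisits

section MeasureComplexity

variable {X : Type*} [PseudoMetricSpace X] {T : X → X} {n : ℕ} {ε : ℝ}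

lemma dbar_lt_of_mem_dynEntourage (hn : n ≠ 0) {x y : X}
    (h : (x, y) ∈ dynEntourage T {p | dist p.1 p.2 < ε} n) : dbar T n x y < ε := by
  rw [dbar, div_lt_iff₀ (by positivity)]
  calc ∑ i ∈ Finset.range n, dist (T^[i] x) (T^[i] y) < ∑ _i ∈ Finset.range n, ε :=
        Finset.sum_lt_sum_of_nonempty (by simpa)
          fun i hi ↦ mem_dynEntourage.1 h i (Finset.mem_range.1 hi)
    _ = ε * n := by rw [Finset.sum_const, Finset.card_range, nsmul_eq_mul, mul_comm]

lemma isOpen_dbarThickening (hT : Continuous T) {ι : Type*} (c : ι → X) :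
    IsOpen (dbarThickening T n ε c) := by
  refine isOpen_iUnion fun i ↦ isOpen_lt ?_ continuous_const
  exact (continuous_finsetSum _ fun j _ ↦ continuous_const.dist (hT.iterate j)).div_const _

lemma exists_dbarThickening_eq_univ (hn : n ≠ 0) {s : Finset X}
    (hs : IsDynCoverOf T Set.univ {p | dist p.1 p.2 < ε} n s) :
    ∃ c : Fin #s → X, dbarThickening T n ε c = Set.univ := by
  refine ⟨fun i ↦ s.equivFin.symm i, Set.eq_univ_of_forall fun x ↦ ?_⟩
  obtain ⟨y, hy, hxy⟩ := hs (Set.mem_univ x)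
  refine Set.mem_iUnion.2 ⟨s.equivFin ⟨y, hy⟩, dbar_lt_of_mem_dynEntourage hn ?_⟩
  simp only [Equiv.symm_apply_apply, mem_dynEntourage]
  intro k hk
  exact (dist_comm _ _).trans_lt (mem_dynEntourage.1 hxy k hk)

lemma coe_log_natCast_le_log {m : ℕ} {a : ℝ≥0∞} (h : m ≤ a) (ha : 1 ≤ a) :
    (Real.log m : EReal) ≤ ENNReal.log a := by
  rcases m.eq_zero_or_pos with rfl | hm
  · simpa using ENNReal.log_monotone ha
  · rw [← ENNReal.log_ofReal_of_pos (by positivity), ENNReal.ofReal_natCast]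
    exact ENNReal.log_monotone h

variable [MeasurableSpace X] {ρ : Measure X} [IsProbabilityMeasure ρ]

lemma measureComplexity_le_card (hn : n ≠ 0) (hε : 0 < ε) {s : Finset X}
    (hs : IsDynCoverOf T Set.univ {p | dist p.1 p.2 < ε} n s) : measureComplexity T ρ n ε ≤ #s := by
  obtain ⟨c, hc⟩ := exists_dbarThickening_eq_univ hn hs
  refine Nat.sInf_le ⟨c, ?_⟩
  change 1 - ε < ρ.real (dbarThickening T n ε c)
  simpa [hc]

lemma exists_lt_real_dbarThickening [CompactSpace X] (hn : n ≠ 0) (hε : 0 < ε) :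
    ∃ c : Fin (measureComplexity T ρ n ε) → X, 1 - ε < ρ.real (dbarThickening T n ε c) := by
  obtain ⟨s, hs⟩ := exists_isDynCoverOf_of_isCompact_invariant (T := T) isCompact_univ
    (Set.mapsTo_univ _ _) (Metric.dist_mem_uniformity hε) n
  obtain ⟨c, hc⟩ := exists_dbarThickening_eq_univ hn hs
  have hmem : ∃ c : Fin #s → X, 1 - ε < ρ.real (dbarThickening T n ε c) := ⟨c, by simpa [hc]⟩
  exact Nat.sInf_mem (s := {m : ℕ | ∃ c : Fin m → X, 1 - ε < ρ.real (dbarThickening T n ε c)})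
    ⟨#s, hmem⟩

lemma limsup_log_measureComplexity_le_coverEntropy (hε : 0 < ε) :
    atTop.limsup (fun n : ℕ ↦ ((Real.log (measureComplexity T ρ n ε) / n : ℝ) : EReal))
      ≤ coverEntropy T Set.univ := by
  refine le_trans ?_ (coverEntropyEntourage_le_coverEntropy T _ (Metric.dist_mem_uniformity hε))
  rw [coverEntropyEntourage, expGrowthSup_def]
  refine limsup_le_limsup ?_
  filter_upwards [eventually_ne_atTop 0] with n hn
  rw [EReal.coe_div]
  refine EReal.div_le_div_right_of_nonneg (Nat.cast_nonneg' n) (coe_log_natCast_le_log ?_ ?_)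
  · rw [← ENat.toENNReal_coe, ENat.toENNReal_le]
    exact le_iInf₂ fun s hs ↦ by exact_mod_cast measureComplexity_le_card hn hε hs
  · rw [← ENat.toENNReal_one, ENat.toENNReal_le, one_le_coverMincard_iff]
    have := ρ.nonempty_of_neZero
    exact Set.univ_nonempty

lemma iSup_limsup_log_measureComplexity_le_coverEntropy (T : X → X) :
    (⨆ ρ : {ρ : Measure X // IsProbabilityMeasure ρ ∧ MeasurePreserving T ρ ρ},
        ⨆ ε : ℝ, ⨆ _ : 0 < ε, atTop.limsup
          (fun n : ℕ ↦ ((Real.log (measureComplexity T ρ.1 n ε) / n : ℝ) : EReal)))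
      ≤ coverEntropy T Set.univ := by
  refine iSup_le fun ρ ↦ iSup₂_le fun ε hε ↦ ?_
  have := ρ.2.1
  exact limsup_log_measureComplexity_le_coverEntropy hε

lemma exists_log_div_lt_and_lt_real_dbarThickening [CompactSpace X] (hε : 0 < ε) (hε1 : ε ≤ 1)
    {α : ℝ}
    (h : atTop.liminf (fun n : ℕ ↦ ((Real.log (measureComplexity T ρ n ε) / n : ℝ) : EReal)) < α) :
    ∃ n m : ℕ, n ≠ 0 ∧ m ≠ 0 ∧ Real.log m / n < α ∧
      ∃ c : Fin m → X, 1 - ε < ρ.real (dbarThickening T n ε c) := by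
  obtain ⟨n, hlog, hn⟩ :=
    ((frequently_lt_of_liminf_lt (by isBoundedDefault) h).and_eventually
      (eventually_ne_atTop 0)).exists
  obtain ⟨c, hc⟩ := exists_lt_real_dbarThickening (T := T) (ρ := ρ) hn hε
  refine ⟨n, _, hn, fun hm ↦ ?_, EReal.coe_lt_coe_iff.1 hlog, c, hc⟩
  have : IsEmpty (Fin (measureComplexity T ρ n ε)) := by rw [hm]; exact Fin.isEmpty
  rw [dbarThickening, Set.iUnion_of_empty, measureReal_empty] at hc
  linarith

end MeasureComplexity

section VariationalPrinciple

variable {X : Type*} {T : X → X}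

lemma expGrowthSup_coverMincard_univ_le {ι : Type*} {s : Finset ι} {F : ι → ℕ → Set X}
    (hF : ∀ᶠ N in atTop, ∀ x, ∃ i ∈ s, x ∈ F i N) (U : SetRel X X) {b : EReal}
    (hb : ∀ i ∈ s, expGrowthSup (fun N ↦ (coverMincard T (F i N) U N : ℝ≥0∞)) ≤ b) :
    expGrowthSup (fun N ↦ (coverMincard T Set.univ U N : ℝ≥0∞)) ≤ b := by
  have hle : (fun N ↦ (coverMincard T Set.univ U N : ℝ≥0∞))
      ≤ᶠ[atTop] ∑ i ∈ s, fun N ↦ (coverMincard T (F i N) U N : ℝ≥0∞) := by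
    filter_upwards [hF] with N hN
    rw [Finset.sum_apply]
    refine le_trans (ENat.toENNReal_mono (coverMincard_monotone_subset T U N fun x _ ↦ ?_))
      (coverMincard_biUnion_le U s fun i ↦ F i N)
    simpa using hN x
  calc expGrowthSup (fun N ↦ (coverMincard T Set.univ U N : ℝ≥0∞))
      ≤ expGrowthSup (∑ i ∈ s, fun N ↦ (coverMincard T (F i N) U N : ℝ≥0∞)) :=
        expGrowthSup_eventually_monotone hle
    _ = ⨆ i ∈ s, expGrowthSup (fun N ↦ (coverMincard T (F i N) U N : ℝ≥0∞)) := expGrowthSup_sum _ _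
    _ ≤ b := iSup₂_le hb

variable [MetricSpace X] [CompactSpace X] [MeasurableSpace X] [BorelSpace X]

lemma coverEntropyEntourage_le_of_forall_liminf_lt (hT : Continuous T) {α β η : ℝ} (hαβ : α < β)
    (hη : 0 < η)
    (h : ∀ ρ : Measure X, IsProbabilityMeasure ρ → MeasurePreserving T ρ ρ → ∀ ε : ℝ, 0 < ε →
      atTop.liminf (fun n : ℕ ↦ ((Real.log (measureComplexity T ρ n ε) / n : ℝ) : EReal)) < α) :
    coverEntropyEntourage T Set.univ {p | dist p.1 p.2 < 2 * η} ≤ β := by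
  obtain ⟨ε, hgrowth, hε, hε1⟩ :=
    ((eventually_nhdsGT_expGrowthSup_coverMincard_frequentVisitors_le T hη (sub_pos.2 hαβ)).and
      (Ioo_mem_nhdsGT one_pos)).exists
  choose n m hn hm hlog c hc using
    fun ρ : {ρ : Measure X // IsProbabilityMeasure ρ ∧ MeasurePreserving T ρ ρ} ↦
      have := ρ.2.1
      exists_log_div_lt_and_lt_real_dbarThickening hε hε1.le (h ρ ρ.2.1 ρ.2.2 ε hε)
  obtain ⟨s, hs⟩ := exists_finset_eventually_forall_lt_birkhoffAverage hT
    (fun ρ ↦ isOpen_dbarThickening (ε := ε) hT (c ρ))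
    fun μ hμ hinv ↦ ⟨⟨μ, hμ, hinv⟩, hc ⟨μ, hμ, hinv⟩⟩
  have hvisit : ∀ᶠ N in atTop, ∀ x, ∃ ρ ∈ s,
      x ∈ frequentVisitors T (dbarThickening T (n ρ) ε (c ρ)) (1 - ε) N := by
    filter_upwards [hs] with N hN x
    exact (hN x).imp fun ρ hρ ↦ ⟨hρ.1, mem_frequentVisitors_of_le_birkhoffAverage hρ.2.le⟩
  refine expGrowthSup_coverMincard_univ_le hvisit _ fun ρ _ ↦
    (hgrowth (hn ρ) (hm ρ) (c ρ)).trans (EReal.coe_le_coe_iff.2 ?_)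
  linarith [hlog ρ]

lemma coverEntropy_le_of_forall_liminf_lt (hT : Continuous T) {α : ℝ}
    (h : ∀ ρ : Measure X, IsProbabilityMeasure ρ → MeasurePreserving T ρ ρ → ∀ ε : ℝ, 0 < ε →
      atTop.liminf (fun n : ℕ ↦ ((Real.log (measureComplexity T ρ n ε) / n : ℝ) : EReal)) < α) :
    coverEntropy T Set.univ ≤ α := by
  rw [coverEntropy_eq_iSup_basis Metric.uniformity_basis_dist]
  refine iSup₂_le fun δ hδ ↦ EReal.le_of_forall_lt_iff_le.1 fun β hαβ ↦ ?_
  have hη := coverEntropyEntourage_le_of_forall_liminf_lt hT (EReal.coe_lt_coe_iff.1 hαβ)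
    (half_pos hδ) h
  rwa [mul_div_cancel₀ δ two_ne_zero] at hη

lemma coverEntropy_le_iSup_liminf_log_measureComplexity (hT : Continuous T) :
    coverEntropy T Set.univ ≤
      ⨆ ρ : {ρ : Measure X // IsProbabilityMeasure ρ ∧ MeasurePreserving T ρ ρ},
        ⨆ ε : ℝ, ⨆ _ : 0 < ε, atTop.liminf
          (fun n : ℕ ↦ ((Real.log (measureComplexity T ρ.1 n ε) / n : ℝ) : EReal)) := by
  refine EReal.le_of_forall_lt_iff_le.1 fun α hα ↦
    coverEntropy_le_of_forall_liminf_lt hT fun ρ hρ hinv ε hε ↦ lt_of_le_of_lt ?_ hα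
  exact le_iSup_of_le ⟨ρ, hρ, hinv⟩ (le_iSup₂_of_le ε hε le_rfl)

theorem variational_principle_measureComplexity_general (hT : Continuous T) :
    (⨆ ρ : {ρ : Measure X // IsProbabilityMeasure ρ ∧ MeasurePreserving T ρ ρ},
        ⨆ ε : ℝ, ⨆ _ : 0 < ε, atTop.limsup
          (fun n : ℕ ↦ ((Real.log (measureComplexity T ρ.1 n ε) / n : ℝ) : EReal)))
      = coverEntropy T Set.univ
    ∧
    (⨆ ρ : {ρ : Measure X // IsProbabilityMeasure ρ ∧ MeasurePreserving T ρ ρ},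
        ⨆ ε : ℝ, ⨆ _ : 0 < ε, atTop.liminf
          (fun n : ℕ ↦ ((Real.log (measureComplexity T ρ.1 n ε) / n : ℝ) : EReal)))
      = coverEntropy T Set.univ := by
  have hlower := coverEntropy_le_iSup_liminf_log_measureComplexity hT
  have hmiddle := iSup_mono
    fun ρ : {ρ : Measure X // IsProbabilityMeasure ρ ∧ MeasurePreserving T ρ ρ} ↦
      iSup₂_mono fun (ε : ℝ) (_ : 0 < ε) ↦ liminf_le_limsup (f := atTop)
        (u := fun n : ℕ ↦ ((Real.log (measureComplexity T ρ.1 n ε) / n : ℝ) : EReal))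
  have hupper := iSup_limsup_log_measureComplexity_le_coverEntropy T
  exact ⟨hupper.antisymm (hlower.trans hmiddle), (hmiddle.trans hupper).antisymm hlower⟩

end VariationalPrinciple

/-- The variational principle for measure complexity: taking the supremum over all invariant
Borel probability measures of `lim_{ε→0} limsup_n (1/n) log S_n(d,ρ,ε)` (resp. with `liminf`)
recovers the topological entropy. Since `(1/n) log S_n(d,ρ,ε)` is nonincreasing in `ε`, the
limit as `ε → 0` is the supremum over `ε > 0`. -/
theorem variational_principle_measureComplexity
    {X : Type*} [MetricSpace X] [CompactSpace X] [MeasurableSpace X] [BorelSpace X]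
    (T : X ≃ₜ X) :
    (⨆ ρ : {ρ : Measure X // IsProbabilityMeasure ρ ∧ MeasurePreserving (T : X → X) ρ ρ},
        ⨆ ε : ℝ, ⨆ _ : 0 < ε, Filter.atTop.limsup
          (fun n : ℕ => ((Real.log (measureComplexity (T : X → X) ρ.1 n ε) / n : ℝ) : EReal)))
      = Dynamics.coverEntropy (T : X → X) Set.univ
    ∧
    (⨆ ρ : {ρ : Measure X // IsProbabilityMeasure ρ ∧ MeasurePreserving (T : X → X) ρ ρ},
        ⨆ ε : ℝ, ⨆ _ : 0 < ε, Filter.atTop.liminf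
          (fun n : ℕ => ((Real.log (measureComplexity (T : X → X) ρ.1 n ε) / n : ℝ) : EReal)))
      = Dynamics.coverEntropy (T : X → X) Set.univ :=
  variational_principle_measureComplexity_general T.continuous
end

section
/- Let (X,T) be a topological dynamical system and ρ a T-invariant Borel probability measure on X with discrete spectrum. Then there exists a metric d′ on X compatible with its topology such that for every ε > 0 there is m = m(ε) ∈ ℕ with S_n(d′,ρ,ε) ≤ m for all n ∈ ℕ; that is, the complexity function n ↦ S_n(d′,ρ,ε) is bounded for every ε > 0. -/
open MeasureTheory Filter

/-- The averaged metric `d̄_n` associated with an arbitrary distance function `d`. -/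
noncomputable def dbarOf {X : Type*} (d : X → X → ℝ) (T : X → X) (n : ℕ) (x y : X) : ℝ :=
  (∑ i ∈ Finset.range n, d (T^[i] x) (T^[i] y)) / n

/-- The measure complexity function `S_n(d,ρ,ε)` with respect to an arbitrary
distance function `d`. -/
noncomputable def measureComplexityOf {X : Type*} [MeasurableSpace X] (d : X → X → ℝ)
    (T : X → X) (ρ : Measure X) (n : ℕ) (ε : ℝ) : ℕ :=
  sInf {m : ℕ | ∃ xs : Fin m → X,
    1 - ε < (ρ (⋃ i, {y | dbarOf d T n (xs i) y < ε})).toReal}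

/-!
Call a function `d` on pairs of points of bounded mean complexity if, up to small measure, `X` is
covered by a bounded number of sets of small `d̄_n`-diameter, uniformly in `n`. If `g` is an
eigenfunction, its eigenvalue has modulus one, so `|g x - g y|` is constant along orbits and a cover
that works for `n = 1` works for every `n`. The property passes to sums and survives perturbations
that are small in `L¹`, because the Birkhoff average of a nonnegative `h` has the same integral as
`h` and is therefore small off a set of small measure. Discrete spectrum thus propagates it from
eigenfunctions to every integrable function. Finally, off an `L¹`-small error, `dist x y` is
dominated by finitely many differences `|dist x z - dist y z|`.
-/

open Set Topology
open scoped ENNReal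

section BirkhoffAverage

variable {X E : Type*} [MeasurableSpace X] {T : X → X} {ρ : Measure X}
  [NormedAddCommGroup E] [NormedSpace ℝ E]

theorem integrable_birkhoffAverage (hT : MeasurePreserving T ρ ρ) {h : X → E}
    (hh : Integrable h ρ) (n : ℕ) : Integrable (birkhoffAverage ℝ T h n) ρ :=
  (integrable_finsetSum _ fun i _ => (hT.iterate i).integrable_comp_of_integrable hh).smul _

theorem integral_birkhoffAverage (hT : MeasurePreserving T ρ ρ) {h : X → E}
    (hh : Integrable h ρ) {n : ℕ} (hn : n ≠ 0) :
    ∫ x, birkhoffAverage ℝ T h n x ∂ρ = ∫ x, h x ∂ρ := by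
  have integrable_iterate (i : ℕ) : Integrable (fun x => h (T^[i] x)) ρ :=
    (hT.iterate i).integrable_comp_of_integrable hh
  have integral_iterate (i : ℕ) : ∫ x, h (T^[i] x) ∂ρ = ∫ x, h x ∂ρ := by
    have hmap := (hT.iterate i).map_eq
    rw [← integral_map (hT.iterate i).aemeasurable (hmap.symm ▸ hh.aestronglyMeasurable), hmap]
  simp only [birkhoffAverage, birkhoffSum]
  rw [integral_smul, integral_finsetSum _ fun i _ => integrable_iterate i]
  simp only [integral_iterate, Finset.sum_const, Finset.card_range, ← Nat.cast_smul_eq_nsmul ℝ]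
  exact inv_smul_smul₀ (Nat.cast_ne_zero.mpr hn) _

theorem mul_measureReal_le_birkhoffAverage_le_integral (hT : MeasurePreserving T ρ ρ) {h : X → ℝ}
    (hh : Integrable h ρ) (h_nonneg : 0 ≤ h) (n : ℕ) (ε : ℝ) :
    ε * ρ.real {x | ε ≤ birkhoffAverage ℝ T h n x} ≤ ∫ x, h x ∂ρ := by
  have average_nonneg : 0 ≤ birkhoffAverage ℝ T h n := fun x =>
    smul_nonneg (by positivity) (Finset.sum_nonneg fun i _ => h_nonneg _)
  refine (mul_meas_ge_le_integral_of_nonneg (.of_forall average_nonneg)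
    (integrable_birkhoffAverage hT hh n) ε).trans ?_
  rcases eq_or_ne n 0 with rfl | hn
  · simpa using integral_nonneg h_nonneg
  · exact (integral_birkhoffAverage hT hh hn).le

end BirkhoffAverage

section dbarOf

variable {X : Type*} {T : X → X} {d d₁ d₂ : X → X → ℝ}

theorem dbarOf_mono (h : ∀ x y, d₁ x y ≤ d₂ x y) (n : ℕ) (x y : X) :
    dbarOf d₁ T n x y ≤ dbarOf d₂ T n x y := by
  unfold dbarOf
  gcongr
  exact h _ _

theorem dbarOf_add (d₁ d₂ : X → X → ℝ) (n : ℕ) (x y : X) :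
    dbarOf (fun x y => d₁ x y + d₂ x y) T n x y = dbarOf d₁ T n x y + dbarOf d₂ T n x y := by
  simp only [dbarOf, Finset.sum_add_distrib, add_div]

theorem dbarOf_const_mul (c : ℝ) (d : X → X → ℝ) (n : ℕ) (x y : X) :
    dbarOf (fun x y => c * d x y) T n x y = c * dbarOf d T n x y := by
  simp only [dbarOf, ← Finset.mul_sum, mul_div_assoc]

theorem dbarOf_eq_birkhoffAverage_add (h : X → ℝ) (n : ℕ) (x y : X) :
    dbarOf (fun x y => h x + h y) T n x y =
      birkhoffAverage ℝ T h n x + birkhoffAverage ℝ T h n y := by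
  simp only [dbarOf, birkhoffAverage, birkhoffSum, smul_eq_mul, Finset.sum_add_distrib]
  ring

theorem dbarOf_le_of_forall_le {c : ℝ} (hc : 0 ≤ c) {n : ℕ} {x y : X}
    (h : ∀ i, d (T^[i] x) (T^[i] y) ≤ c) : dbarOf d T n x y ≤ c := by
  refine div_le_of_le_mul₀ n.cast_nonneg hc ?_
  calc ∑ i ∈ Finset.range n, d (T^[i] x) (T^[i] y)
      ≤ ∑ _i ∈ Finset.range n, c := Finset.sum_le_sum fun i _ => h i
    _ = c * n := by rw [Finset.sum_const, Finset.card_range, nsmul_eq_mul, mul_comm]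

end dbarOf

/-- Bounded measure complexity in covering form: for every `ε > 0` there is a number of sets that
suffices, for all `n` at once, to cover `X` up to measure `ε` by sets of `d̄_n`-diameter at most
`ε`. The sets themselves may depend on `n`. The function `d` need not be a metric, so that the
notion applies to `d x y = dist (f x) (f y)` for a function `f`. The measure `ρ` is meant to be
finite, since `ρ.real` is zero on sets of infinite measure. -/
def HasBoundedMeanComplexity {X : Type*} [MeasurableSpace X] (d : X → X → ℝ) (T : X → X)
    (ρ : Measure X) : Prop :=
  ∀ ε > (0 : ℝ), ∃ (ι : Type) (_ : Finite ι), ∀ n : ℕ, ∃ A : ι → Set X,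
    ρ.real (⋃ i, A i)ᶜ ≤ ε ∧ ∀ i, ∀ x ∈ A i, ∀ y ∈ A i, dbarOf d T n x y ≤ ε

theorem exists_finite_iUnion_dist_le {X Y : Type*} [MeasurableSpace X] {ρ : Measure X}
    [IsFiniteMeasure ρ] [PseudoMetricSpace Y] [TopologicalSpace.SeparableSpace Y]
    [MeasurableSpace Y] [OpensMeasurableSpace Y] {f : X → Y} (hf : AEMeasurable f ρ)
    {ε : ℝ} (hε : 0 < ε) :
    ∃ (ι : Type) (_ : Finite ι) (A : ι → Set X), ρ.real (⋃ i, A i)ᶜ ≤ ε ∧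
      ∀ i, ∀ x ∈ A i, ∀ y ∈ A i, dist (f x) (f y) ≤ ε := by
  rcases isEmpty_or_nonempty Y with hY | hY
  · have := f.isEmpty
    exact ⟨Empty, inferInstance, fun _ => ∅, by simp [Set.eq_empty_of_isEmpty, hε.le], by simp⟩
  let u := TopologicalSpace.denseSeq Y
  let B (k : ℕ) : Set X := f ⁻¹' Metric.ball (u k) (ε / 2)
  have iUnion_B : ⋃ k, B k = univ := eq_univ_of_forall fun x =>
    mem_iUnion.mpr ((TopologicalSpace.denseRange_denseSeq Y).exists_dist_lt (f x) (half_pos hε))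
  obtain ⟨N, hN⟩ := exists_measure_iInter_lt (μ := ρ) (f := fun k => (B k)ᶜ)
    (fun k => (hf.nullMeasurableSet_preimage Metric.isOpen_ball.measurableSet).compl)
    (ENNReal.ofReal_pos.mpr hε) ⟨0, measure_ne_top _ _⟩
    (by rw [← compl_iUnion, iUnion_B, compl_univ])
  refine ⟨Iic N, inferInstance, fun k => B k, ?_, fun k x hx y hy => ?_⟩
  · rw [iUnion_subtype, compl_iUnion₂]
    exact ENNReal.toReal_le_of_le_ofReal hε.le hN.le
  · rw [← add_halves ε]
    exact (dist_triangle_right _ _ _).trans (add_le_add (le_of_lt hx) (le_of_lt hy))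

namespace HasBoundedMeanComplexity

section Operations

variable {X : Type*} [MeasurableSpace X] {T : X → X} {ρ : Measure X} {d d₁ d₂ : X → X → ℝ}

theorem zero : HasBoundedMeanComplexity (fun _ _ => 0) T ρ := by
  refine fun ε hε => ⟨Unit, inferInstance, fun n => ⟨fun _ => univ, ?_, fun _ _ _ _ _ =>
    dbarOf_le_of_forall_le hε.le fun _ => hε.le⟩⟩
  rw [iUnion_const, compl_univ, measureReal_empty]
  exact hε.le

theorem mono (h₂ : HasBoundedMeanComplexity d₂ T ρ) (h : ∀ x y, d₁ x y ≤ d₂ x y) :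
    HasBoundedMeanComplexity d₁ T ρ := by
  intro ε hε
  obtain ⟨ι, hι, hcover⟩ := h₂ ε hε
  refine ⟨ι, hι, fun n => ?_⟩
  obtain ⟨A, hA, hdiam⟩ := hcover n
  exact ⟨A, hA, fun i x hx y hy => (dbarOf_mono h n x y).trans (hdiam i x hx y hy)⟩

theorem add (h₁ : HasBoundedMeanComplexity d₁ T ρ) (h₂ : HasBoundedMeanComplexity d₂ T ρ) :
    HasBoundedMeanComplexity (fun x y => d₁ x y + d₂ x y) T ρ := by
  intro ε hε
  obtain ⟨ι₁, _, hcover₁⟩ := h₁ (ε / 2) (half_pos hε)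
  obtain ⟨ι₂, _, hcover₂⟩ := h₂ (ε / 2) (half_pos hε)
  refine ⟨ι₁ × ι₂, inferInstance, fun n => ?_⟩
  obtain ⟨A, hA, hdiamA⟩ := hcover₁ n
  obtain ⟨B, hB, hdiamB⟩ := hcover₂ n
  refine ⟨fun p => A p.1 ∩ B p.2, ?_, fun p x hx y hy => ?_⟩
  · rw [iUnion_prod', ← iUnion_inter_iUnion, compl_inter, ← add_halves ε]
    exact (measureReal_union_le _ _).trans (add_le_add hA hB)
  · rw [dbarOf_add, ← add_halves ε]
    exact add_le_add (hdiamA p.1 x hx.1 y hy.1) (hdiamB p.2 x hx.2 y hy.2)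

theorem const_mul (hd : HasBoundedMeanComplexity d T ρ) {c : ℝ} (hc : 0 ≤ c) :
    HasBoundedMeanComplexity (fun x y => c * d x y) T ρ := by
  intro ε hε
  obtain ⟨ι, hι, hcover⟩ := hd (ε / (c + 1)) (by positivity)
  refine ⟨ι, hι, fun n => ?_⟩
  obtain ⟨A, hA, hdiam⟩ := hcover n
  refine ⟨A, hA.trans (div_le_self hε.le (by linarith)), fun i x hx y hy => ?_⟩
  calc dbarOf (fun x y => c * d x y) T n x y
      = c * dbarOf d T n x y := dbarOf_const_mul c d n x y
    _ ≤ c * (ε / (c + 1)) := by gcongr; exact hdiam i x hx y hy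
    _ ≤ (c + 1) * (ε / (c + 1)) := by gcongr; linarith
    _ = ε := by field_simp

theorem sum {J : Type*} (s : Finset J) {d : J → X → X → ℝ}
    (hd : ∀ j ∈ s, HasBoundedMeanComplexity (d j) T ρ) :
    HasBoundedMeanComplexity (fun x y => ∑ j ∈ s, d j x y) T ρ := by
  classical
  induction s using Finset.induction_on with
  | empty => simpa only [Finset.sum_empty] using zero
  | insert j s hj ih =>
    simp only [Finset.sum_insert hj]
    exact (hd j (s.mem_insert_self j)).add (ih fun k hk => hd k (Finset.mem_insert_of_mem hk))

theorem of_forall_le_add_error (hT : MeasurePreserving T ρ ρ)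
    (happrox : ∀ η > (0 : ℝ), ∃ (d' : X → X → ℝ) (h : X → ℝ), HasBoundedMeanComplexity d' T ρ ∧
      Integrable h ρ ∧ 0 ≤ h ∧ ∫ x, h x ∂ρ ≤ η ∧ ∀ x y, d x y ≤ d' x y + (h x + h y)) :
    HasBoundedMeanComplexity d T ρ := by
  intro ε hε
  obtain ⟨d', h, hd', h_int, h_nonneg, h_small, hle⟩ := happrox (ε / 3 * (ε / 3)) (by positivity)
  obtain ⟨ι, hι, hcover⟩ := hd' (ε / 3) (by positivity)
  refine ⟨ι, hι, fun n => ?_⟩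
  obtain ⟨A, hA, hdiam⟩ := hcover n
  have error_large : ρ.real {x | ε / 3 ≤ birkhoffAverage ℝ T h n x} ≤ ε / 3 :=
    le_of_mul_le_mul_left
      ((mul_measureReal_le_birkhoffAverage_le_integral hT h_int h_nonneg n _).trans h_small)
      (by positivity)
  refine ⟨fun i => A i ∩ {x | ε / 3 ≤ birkhoffAverage ℝ T h n x}ᶜ, ?_, fun i x hx y hy => ?_⟩
  · rw [← iUnion_inter, compl_inter, compl_compl]
    linarith [measureReal_union_le (μ := ρ) (⋃ i, A i)ᶜ
      {x | ε / 3 ≤ birkhoffAverage ℝ T h n x}]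
  · have hx_error : birkhoffAverage ℝ T h n x < ε / 3 := not_le.mp hx.2
    have hy_error : birkhoffAverage ℝ T h n y < ε / 3 := not_le.mp hy.2
    calc dbarOf d T n x y
        ≤ dbarOf (fun x y => d' x y + (h x + h y)) T n x y := dbarOf_mono hle n x y
      _ = dbarOf d' T n x y + (birkhoffAverage ℝ T h n x + birkhoffAverage ℝ T h n y) := by
        rw [dbarOf_add d' (fun x y => h x + h y), dbarOf_eq_birkhoffAverage_add]
      _ ≤ ε / 3 + (ε / 3 + ε / 3) := by gcongr; exact hdiam i x hx.1 y hy.1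
      _ = ε := by ring

theorem exists_measureComplexityOf_le [IsProbabilityMeasure ρ]
    (hd : HasBoundedMeanComplexity d T ρ) {ε : ℝ} (hε : 0 < ε) :
    ∃ m : ℕ, ∀ n : ℕ, measureComplexityOf d T ρ n ε ≤ m := by
  obtain ⟨ι, _, hcover⟩ := hd (ε / 2) (half_pos hε)
  refine ⟨Nat.card ι, fun n => Nat.sInf_le ?_⟩
  obtain ⟨A, hA, hdiam⟩ := hcover n
  have := nonempty_of_isProbabilityMeasure ρ
  have exists_center (i : ι) : ∃ x, ∀ y ∈ A i, dbarOf d T n x y < ε := by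
    rcases (A i).eq_empty_or_nonempty with hempty | ⟨x, hx⟩
    · exact ⟨Classical.arbitrary X, by simp [hempty]⟩
    · exact ⟨x, fun y hy => (hdiam i x hx y hy).trans_lt (half_lt_self hε)⟩
  choose center hcenter using exists_center
  let e := Finite.equivFin ι
  refine ⟨center ∘ e.symm, ?_⟩
  set U := ⋃ k, {y | dbarOf d T n ((center ∘ e.symm) k) y < ε}
  have iUnion_subset_U : ⋃ i, A i ⊆ U := iUnion_subset fun i y hy =>
    mem_iUnion.mpr ⟨e i, by simpa using hcenter i y hy⟩
  have measure_compl_U : ρ.real Uᶜ ≤ ε / 2 :=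
    (measureReal_mono (compl_subset_compl.mpr iUnion_subset_U)).trans hA
  have one_le : 1 ≤ ρ.real U + ρ.real Uᶜ := by
    simpa using measureReal_union_le (μ := ρ) U Uᶜ
  change 1 - ε < ρ.real U
  linarith

end Operations

section Functions

variable {X Y : Type*} [MeasurableSpace X] {T : X → X} {ρ : Measure X} [PseudoMetricSpace Y]

theorem of_forall_integral_dist_le (hT : MeasurePreserving T ρ ρ) {f : X → Y}
    (happrox : ∀ η > (0 : ℝ), ∃ g : X → Y,
      HasBoundedMeanComplexity (fun x y => dist (g x) (g y)) T ρ ∧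
      Integrable (fun x => dist (f x) (g x)) ρ ∧ ∫ x, dist (f x) (g x) ∂ρ ≤ η) :
    HasBoundedMeanComplexity (fun x y => dist (f x) (f y)) T ρ := by
  refine of_forall_le_add_error hT fun η hη => ?_
  obtain ⟨g, hg, hint, hsmall⟩ := happrox η hη
  refine ⟨_, fun x => dist (f x) (g x), hg, hint, fun _ => dist_nonneg, hsmall, fun x y => ?_⟩
  linarith [dist_triangle4_right (f x) (f y) (g x) (g y)]

theorem congr_ae (hT : MeasurePreserving T ρ ρ) {f g : X → Y}
    (hg : HasBoundedMeanComplexity (fun x y => dist (g x) (g y)) T ρ) (hfg : f =ᵐ[ρ] g) :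
    HasBoundedMeanComplexity (fun x y => dist (f x) (f y)) T ρ := by
  have dist_ae_zero : (fun x => dist (f x) (g x)) =ᵐ[ρ] fun _ => (0 : ℝ) := by
    filter_upwards [hfg] with x hx
    rw [hx, dist_self]
  refine of_forall_integral_dist_le hT fun η hη => ⟨g, hg, ?_, ?_⟩
  · exact (integrable_congr dist_ae_zero).mpr (integrable_zero _ _ _)
  · rw [integral_congr_ae dist_ae_zero, integral_zero]
    exact hη.le

theorem of_forall_eLpNorm_sub_le {E : Type*} [NormedAddCommGroup E] [IsProbabilityMeasure ρ]
    (hT : MeasurePreserving T ρ ρ) {p : ℝ≥0∞} (hp : 1 ≤ p) {f : X → E}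
    (hf : AEStronglyMeasurable f ρ)
    (happrox : ∀ η > (0 : ℝ), ∃ g : X → E,
      HasBoundedMeanComplexity (fun x y => dist (g x) (g y)) T ρ ∧
      AEStronglyMeasurable g ρ ∧ eLpNorm (f - g) p ρ ≤ ENNReal.ofReal η) :
    HasBoundedMeanComplexity (fun x y => dist (f x) (f y)) T ρ := by
  refine of_forall_integral_dist_le hT fun η hη => ?_
  obtain ⟨g, hg, hg_meas, hle⟩ := happrox η hη
  have hfg := hf.sub hg_meas
  have eLpNorm_one_le : eLpNorm (f - g) 1 ρ ≤ ENNReal.ofReal η :=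
    (eLpNorm_le_eLpNorm_of_exponent_le hp hfg).trans hle
  have hint : Integrable (f - g) ρ :=
    memLp_one_iff_integrable.mp ⟨hfg, eLpNorm_one_le.trans_lt ENNReal.ofReal_lt_top⟩
  simp only [dist_eq_norm]
  refine ⟨g, by simpa only [dist_eq_norm] using hg, hint.norm, ?_⟩
  calc ∫ x, ‖f x - g x‖ ∂ρ = (eLpNorm (f - g) 1 ρ).toReal := by
        rw [toReal_eLpNorm hfg, lpNorm_one_eq_integral_norm hfg]; rfl
    _ ≤ η := ENNReal.toReal_le_of_le_ofReal hη.le eLpNorm_one_le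

end Functions

end HasBoundedMeanComplexity

section Eigenfunctions

variable {X 𝕜 E : Type*} [MeasurableSpace X] {T : X → X} {ρ : Measure X} [NormedField 𝕜]
  [NormedAddCommGroup E] [NormedSpace 𝕜 E] {c : 𝕜}

theorem norm_eq_one_of_comp_ae_eq_smul (hT : MeasurePreserving T ρ ρ) {p : ℝ≥0∞} (hp : 0 < p)
    {g : Lp E p ρ} (hg : g ≠ 0) (hc : g ∘ T =ᵐ[ρ] c • ⇑g) : ‖c‖ = 1 := by
  have eLpNorm_eq : eLpNorm g p ρ = ‖c‖ₑ * eLpNorm g p ρ := by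
    rw [← eLpNorm_const_smul, ← eLpNorm_congr_ae hc,
      eLpNorm_comp_measurePreserving (Lp.aestronglyMeasurable g) hT]
  have norm_eq : 1 * ‖g‖ = ‖c‖ * ‖g‖ := by
    rw [one_mul, Lp.norm_def, ← toReal_enorm c, ← ENNReal.toReal_mul, ← eLpNorm_eq]
  exact (mul_right_cancel₀ ((Lp.norm_eq_zero_iff hp).not.mpr hg) norm_eq).symm

theorem ae_iterate_eq_pow_smul (hT : Measure.QuasiMeasurePreserving T ρ ρ) {g : X → E}
    (hc : g ∘ T =ᵐ[ρ] c • g) : ∀ᵐ x ∂ρ, ∀ i : ℕ, g (T^[i] x) = c ^ i • g x := by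
  have step : ∀ᵐ x ∂ρ, ∀ i : ℕ, g (T (T^[i] x)) = c • g (T^[i] x) :=
    ae_all_iff.mpr fun i => (hT.iterate i).ae hc
  filter_upwards [step] with x hx i
  induction i with
  | zero => simp only [Function.iterate_zero_apply, pow_zero, one_smul]
  | succ i ih => rw [Function.iterate_succ_apply', hx, ih, smul_smul, pow_succ']

theorem HasBoundedMeanComplexity.of_comp_ae_eq_smul [IsFiniteMeasure ρ] [MeasurableSpace E]
    [OpensMeasurableSpace E] [TopologicalSpace.SeparableSpace E]
    (hT : Measure.QuasiMeasurePreserving T ρ ρ) {g : X → E} (hg : AEMeasurable g ρ)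
    (hc_norm : ‖c‖ ≤ 1) (hc : g ∘ T =ᵐ[ρ] c • g) :
    HasBoundedMeanComplexity (fun x y => dist (g x) (g y)) T ρ := by
  intro ε hε
  obtain ⟨ι, hι, A, hA, hdiam⟩ := exists_finite_iUnion_dist_le hg hε
  set I : Set X := {x | ∀ i : ℕ, g (T^[i] x) = c ^ i • g x}
  have measure_compl_I : ρ.real Iᶜ = 0 :=
    (measureReal_eq_zero_iff).mpr (ae_iterate_eq_pow_smul hT hc)
  refine ⟨ι, hι, fun n => ⟨fun i => A i ∩ I, ?_, fun i x hx y hy => ?_⟩⟩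
  · rw [← iUnion_inter, compl_inter]
    linarith [measureReal_union_le (μ := ρ) (⋃ i, A i)ᶜ Iᶜ]
  · refine dbarOf_le_of_forall_le hε.le fun k => ?_
    calc dist (g (T^[k] x)) (g (T^[k] y)) = ‖c‖ ^ k * dist (g x) (g y) := by
          rw [hx.2 k, hy.2 k, dist_smul₀, norm_pow]
      _ ≤ dist (g x) (g y) :=
        mul_le_of_le_one_left dist_nonneg (pow_le_one₀ (norm_nonneg c) hc_norm)
      _ ≤ ε := hdiam i x hx.1 y hy.1

end Eigenfunctions

section DiscreteSpectrum

variable {X : Type*} [MeasurableSpace X] {T : X → X} {ρ : Measure X}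

/-- The eigenfunctions in `L²(X, ρ)` of the Koopman operator `g ↦ g ∘ T`. -/
def koopmanEigenfunctions (T : X → X) (ρ : Measure X) : Set (Lp ℂ 2 ρ) :=
  {g | g ≠ 0 ∧ ∃ c : ℂ, (fun x => (g : X → ℂ) (T x)) =ᵐ[ρ] fun x => c * (g : X → ℂ) x}

/-- The measure `ρ` has discrete spectrum for `T`: the eigenfunctions of the Koopman operator span
a dense subspace of `L²(X, ρ)`. -/
def HasDiscreteSpectrum (T : X → X) (ρ : Measure X) : Prop :=
  (Submodule.span ℂ (koopmanEigenfunctions T ρ)).topologicalClosure = ⊤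

namespace HasBoundedMeanComplexity

theorem of_mem_span_koopmanEigenfunctions [IsFiniteMeasure ρ] (hT : MeasurePreserving T ρ ρ)
    {f : Lp ℂ 2 ρ} (hf : f ∈ Submodule.span ℂ (koopmanEigenfunctions T ρ)) :
    HasBoundedMeanComplexity (fun x y => dist (f x) (f y)) T ρ := by
  induction hf using Submodule.span_induction with
  | mem g hg =>
    obtain ⟨hg_ne, c, hc⟩ := hg
    have hc : g ∘ T =ᵐ[ρ] c • ⇑g := hc
    exact of_comp_ae_eq_smul hT.quasiMeasurePreserving
      (Lp.stronglyMeasurable g).measurable.aemeasurable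
      (norm_eq_one_of_comp_ae_eq_smul hT zero_lt_two hg_ne hc).le hc
  | zero =>
    refine congr_ae hT ?_ (Lp.coeFn_zero ℂ 2 ρ)
    simpa only [Pi.zero_apply, dist_self] using zero
  | add f g _ _ hf hg =>
    refine congr_ae hT ((hf.add hg).mono fun x y => ?_) (Lp.coeFn_add f g)
    exact dist_add_add_le _ _ _ _
  | smul c f _ hf =>
    refine congr_ae hT ((hf.const_mul (norm_nonneg c)).mono fun x y => ?_) (Lp.coeFn_smul c f)
    exact (dist_smul₀ c (f x) (f y)).le

variable [IsProbabilityMeasure ρ]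

theorem of_hasDiscreteSpectrum_Lp (hT : MeasurePreserving T ρ ρ) (hds : HasDiscreteSpectrum T ρ)
    (f : Lp ℂ 2 ρ) :
    HasBoundedMeanComplexity (fun x y => dist (f x) (f y)) T ρ := by
  refine of_forall_eLpNorm_sub_le hT one_le_two (Lp.aestronglyMeasurable f) fun η hη => ?_
  have hf : f ∈ (Submodule.span ℂ (koopmanEigenfunctions T ρ)).topologicalClosure :=
    hds ▸ Submodule.mem_top
  obtain ⟨g, hg, hfg⟩ := Metric.mem_closure_iff.mp hf η hη
  refine ⟨g, of_mem_span_koopmanEigenfunctions hT hg, Lp.aestronglyMeasurable g, ?_⟩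
  rw [← Lp.edist_def, edist_dist]
  exact ENNReal.ofReal_le_ofReal hfg.le

theorem of_hasDiscreteSpectrum_of_integrable (hT : MeasurePreserving T ρ ρ)
    (hds : HasDiscreteSpectrum T ρ) {f : X → ℂ} (hf : Integrable f ρ) :
    HasBoundedMeanComplexity (fun x y => dist (f x) (f y)) T ρ := by
  refine of_forall_eLpNorm_sub_le hT le_rfl hf.aestronglyMeasurable fun η hη => ?_
  obtain ⟨s, hs, -⟩ := (memLp_one_iff_integrable.mpr hf).exists_simpleFunc_eLpNorm_sub_lt
    ENNReal.one_ne_top (ENNReal.ofReal_pos.mpr hη).ne'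
  have s_memLp := s.memLp_of_isFiniteMeasure 2 ρ
  exact ⟨s, congr_ae hT (of_hasDiscreteSpectrum_Lp hT hds (s_memLp.toLp s)) s_memLp.coeFn_toLp.symm,
    s.aestronglyMeasurable, hs.le⟩

end HasBoundedMeanComplexity

end DiscreteSpectrum

section Metric

variable {X : Type*} [PseudoMetricSpace X]

theorem dist_le_sum_abs_dist_sub_add_infDist {s : Finset X} (hs : s.Nonempty) (x y : X) :
    dist x y ≤ ∑ z ∈ s, |dist x z - dist y z| + 2 * Metric.infDist x s := by
  obtain ⟨z, hz, hxz⟩ := s.finite_toSet.isCompact.exists_infDist_eq_dist hs.to_set x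
  have single_le : |dist x z - dist y z| ≤ ∑ z ∈ s, |dist x z - dist y z| :=
    Finset.single_le_sum (f := fun z => |dist x z - dist y z|) (fun _ _ => abs_nonneg _) hz
  rw [hxz]
  linarith [dist_triangle_right x y z, neg_abs_le (dist x z - dist y z)]

theorem tendsto_infDist_image_Iic {u : ℕ → X} (hu : DenseRange u) (x : X) :
    Tendsto (fun N => Metric.infDist x (u '' Iic N)) atTop (𝓝 0) := by
  refine Metric.tendsto_atTop.mpr fun ε hε => ?_
  obtain ⟨k, hk⟩ := hu.exists_dist_lt x hε
  refine ⟨k, fun N hN => ?_⟩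
  rw [Real.dist_0_eq_abs, abs_of_nonneg Metric.infDist_nonneg]
  exact (Metric.infDist_le_dist_of_mem (mem_image_of_mem u (mem_Iic.mpr hN))).trans_lt hk

variable [TopologicalSpace.SeparableSpace X] [MeasurableSpace X] [OpensMeasurableSpace X]
  {ρ : Measure X}

theorem exists_finset_integral_infDist_le [Nonempty X]
    (hint : ∀ z, Integrable (fun x => dist x z) ρ) {η : ℝ} (hη : 0 < η) :
    ∃ s : Finset X, s.Nonempty ∧ Integrable (fun x => Metric.infDist x s) ρ ∧
      ∫ x, Metric.infDist x s ∂ρ ≤ η := by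
  classical
  let u := TopologicalSpace.denseSeq X
  have infDist_meas (s : Set X) : AEStronglyMeasurable (fun x => Metric.infDist x s) ρ :=
    (Metric.continuous_infDist_pt s).measurable.aestronglyMeasurable
  have infDist_le (N : ℕ) (x : X) : ‖Metric.infDist x (u '' Iic N)‖ ≤ dist x (u 0) := by
    rw [Real.norm_of_nonneg Metric.infDist_nonneg]
    exact Metric.infDist_le_dist_of_mem (mem_image_of_mem u N.zero_le)
  have lim : Tendsto (fun N => ∫ x, Metric.infDist x (u '' Iic N) ∂ρ) atTop (𝓝 0) := by
    simpa only [integral_zero] using tendsto_integral_of_dominated_convergence _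
      (fun N => infDist_meas _) (hint (u 0)) (fun N => .of_forall (infDist_le N))
      (.of_forall (tendsto_infDist_image_Iic (TopologicalSpace.denseRange_denseSeq X)))
  obtain ⟨N, hN⟩ := (lim.eventually (gt_mem_nhds hη)).exists
  refine ⟨(Finset.Iic N).image u, Finset.nonempty_Iic.image u, ?_⟩
  rw [Finset.coe_image, Finset.coe_Iic]
  exact ⟨(hint (u 0)).mono' (infDist_meas _) (.of_forall (infDist_le N)), hN.le⟩

theorem HasBoundedMeanComplexity.dist_of_hasDiscreteSpectrum [IsProbabilityMeasure ρ] {T : X → X}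
    (hT : MeasurePreserving T ρ ρ) (hint : ∀ z, Integrable (fun x => dist x z) ρ)
    (hds : HasDiscreteSpectrum T ρ) : HasBoundedMeanComplexity dist T ρ := by
  have := nonempty_of_isProbabilityMeasure ρ
  have abs_dist_sub (z : X) :
      HasBoundedMeanComplexity (fun x y => |dist x z - dist y z|) T ρ :=
    (of_hasDiscreteSpectrum_of_integrable hT hds (hint z).ofReal).mono fun x y =>
      (Complex.isometry_ofReal.dist_eq (dist x z) (dist y z)).ge
  refine of_forall_le_add_error hT fun η hη => ?_
  obtain ⟨s, hs, hs_int, hs_small⟩ := exists_finset_integral_infDist_le hint (half_pos hη)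
  refine ⟨_, fun x => 2 * Metric.infDist x s, sum s fun z _ => abs_dist_sub z, hs_int.const_mul 2,
    fun x => mul_nonneg zero_le_two Metric.infDist_nonneg, ?_, fun x y => ?_⟩
  · rw [integral_const_mul]
    linarith
  · linarith [dist_le_sum_abs_dist_sub_add_infDist hs x y, Metric.infDist_nonneg (x := y) (s := s)]

theorem bounded_complexity_of_discrete_spectrum_general [IsProbabilityMeasure ρ] {T : X → X}
    (hT : MeasurePreserving T ρ ρ) (hint : ∀ z, Integrable (fun x => dist x z) ρ)
    (hds : HasDiscreteSpectrum T ρ) :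
    ∀ ε > (0 : ℝ), ∃ m : ℕ, ∀ n : ℕ, measureComplexityOf dist T ρ n ε ≤ m :=
  have hdist := HasBoundedMeanComplexity.dist_of_hasDiscreteSpectrum hT hint hds
  fun _ hε => hdist.exists_measureComplexityOf_le hε

end Metric

/-- If an invariant Borel probability measure `ρ` has discrete spectrum, then there is a
metric `d'` compatible with the topology of `X` for which the complexity function
`n ↦ S_n(d',ρ,ε)` is bounded for every `ε > 0`. -/
theorem bounded_complexity_of_discrete_spectrum
    {X : Type*} [MetricSpace X] [CompactSpace X] [MeasurableSpace X] [BorelSpace X]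
    (T : X ≃ₜ X)
    (ρ : Measure X) (hρprob : IsProbabilityMeasure ρ)
    (hρinv : MeasurePreserving (T : X → X) ρ ρ)
    (hds : (Submodule.span ℂ {g : Lp ℂ 2 ρ | g ≠ 0 ∧ ∃ c : ℂ,
        (fun x => (g : X → ℂ) ((T : X → X) x)) =ᵐ[ρ]
          fun x => c * (g : X → ℂ) x}).topologicalClosure = ⊤) :
    ∃ d' : X → X → ℝ,
      -- `d'` is a metric on `X` …
      (∀ x y, 0 ≤ d' x y) ∧ (∀ x y, d' x y = 0 ↔ x = y) ∧ (∀ x y, d' x y = d' y x) ∧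
      (∀ x y z, d' x z ≤ d' x y + d' y z) ∧
      -- … compatible with the topology of `X` …
      (∀ x : X, (nhds x).HasBasis (fun ε : ℝ => 0 < ε) (fun ε => {y | d' x y < ε})) ∧
      -- … whose complexity function is bounded for every `ε > 0`
      (∀ ε > (0 : ℝ), ∃ m : ℕ, ∀ n : ℕ,
        measureComplexityOf d' (T : X → X) ρ n ε ≤ m) := by
  refine ⟨dist, fun _ _ => dist_nonneg, fun _ _ => dist_eq_zero, dist_comm, dist_triangle,
    fun x => by simp only [dist_comm x]; exact Metric.nhds_basis_ball, ?_⟩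
  exact bounded_complexity_of_discrete_spectrum_general hρinv
    (fun z => (continuous_id.dist continuous_const).integrable_of_hasCompactSupport
      (HasCompactSupport.of_compactSpace _)) hds
end
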